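/- Let N be odd, α ∈ ℝ with α ≠ 1, and set α' = (α+3)/(α−1). Suppose v, w ∈ V_N are nonzero vectors such that H(α) v = E(α) v, H(α') w = E(α') w, both v(μ) = 0 and w(μ) = 0 whenever n₊(μ) is odd, w(−) ≠ 0 where (−) is the all-minus configuration, and the eigenspace {u ∈ V_N : H(α') u = E(α') u} has complex dimension exactly 2. Then R^y v = c · (w + I w), where c = (Σ_μ v(μ)) / (2^{N/2} w(−)) and (I w)(μ) = w(−μ). -/

import Mathlib

open Finset

/-- Spin configurations of length `N`: maps `ℤ/N → {−1,+1}` (spins encoded as units of `ℤ`). -/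
abbrev Config (N : ℕ) : Type := ZMod N → ℤˣ

/-- The state space `V_N`: complex-valued functions on configurations. -/
abbrev StateSpace (N : ℕ) : Type := Config N → ℂ

/-- The spin value `μ_j` as a complex number (`+1` or `−1`). -/
def spin {N : ℕ} (μ : Config N) (j : ZMod N) : ℂ := ((μ j : ℤ) : ℂ)

/-- Flip the spin at site `j`. -/
def flipAt {N : ℕ} (μ : Config N) (j : ZMod N) : Config N :=
  Function.update μ j (-(μ j))

/-- `μ^{(j,j+1)}`: the configuration `μ` with the spins at sites `j` and `j+1` (mod `N`) flipped. -/
def flipPair {N : ℕ} (μ : Config N) (j : ZMod N) : Config N :=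
  flipAt (flipAt μ j) (j + 1)

/-- The periodic XYZ Hamiltonian with real couplings `Jx, Jy, Jz`:
`(H Ψ)(μ) = −(1/2) Σ_j [(Jx − Jy μ_j μ_{j+1}) Ψ(μ^{(j,j+1)}) + Jz μ_j μ_{j+1} Ψ(μ)]`. -/
noncomputable def Hxyz (N : ℕ) [NeZero N] (Jx Jy Jz : ℝ) (Ψ : StateSpace N) : StateSpace N :=
  fun μ => -(1/2 : ℂ) * ∑ j : ZMod N,
    (((Jx : ℂ) - (Jy : ℂ) * spin μ j * spin μ (j + 1)) * Ψ (flipPair μ j)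
      + (Jz : ℂ) * spin μ j * spin μ (j + 1) * Ψ μ)

/-- `n₊(μ)`: the number of sites `j` with `μ_j = +1`. -/
def nPlus {N : ℕ} [NeZero N] (μ : Config N) : ℕ :=
  (Finset.univ.filter (fun j => μ j = 1)).card

/-- The spin-inversion operator: `(I Ψ)(μ) = Ψ(−μ)`. -/
def invOp (N : ℕ) (Ψ : StateSpace N) : StateSpace N :=
  fun μ => Ψ (fun j => -(μ j))

/-- `H(α)`: the XYZ Hamiltonian with `Jx = 1+α`, `Jy = 1−α`, `Jz = (α²−1)/2`. -/
noncomputable def Halpha (N : ℕ) [NeZero N] (α : ℝ) : StateSpace N → StateSpace N :=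
  Hxyz N (1 + α) (1 - α) ((α ^ 2 - 1) / 2)

/-- `E(α) = −(N/4)(3 + α²)`. -/
noncomputable def Eval (N : ℕ) (α : ℝ) : ℝ := -(N / 4 : ℝ) * (3 + α ^ 2)

/-- `m(μ,ν) = #{j : μ_j = −1 and ν_j = +1}`. -/
def mCount {N : ℕ} [NeZero N] (μ ν : Config N) : ℕ :=
  (Finset.univ.filter (fun j => μ j = -1 ∧ ν j = 1)).card

/-- Rotation of every spin by π/2 about the y-axis:
`(Rʸ Ψ)(μ) = 2^{−N/2} Σ_ν (−1)^{m(μ,ν)} Ψ(ν)`. -/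
noncomputable def Ry (N : ℕ) [NeZero N] (Ψ : StateSpace N) : StateSpace N :=
  fun μ => ((Real.sqrt 2 : ℂ) ^ N)⁻¹ * ∑ ν : Config N, (-1 : ℂ) ^ mCount μ ν * Ψ ν

/-- The periodic XYZ Hamiltonian as a linear operator on `V_N`. -/
noncomputable def HxyzL (N : ℕ) [NeZero N] (Jx Jy Jz : ℝ) : Module.End ℂ (StateSpace N) where
  toFun := Hxyz N Jx Jy Jz
  map_add' Ψ Φ := by
    funext μ
    simp only [Hxyz, Pi.add_apply, mul_add, add_mul, Finset.sum_add_distrib]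
    ring
  map_smul' c Ψ := by
    funext μ
    simp only [Hxyz, Pi.smul_apply, smul_eq_mul, RingHom.id_apply, mul_add, add_mul,
      Finset.mul_sum, Finset.sum_add_distrib]
    congr 1 <;> exact Finset.sum_congr rfl (fun j _ => by ring)

/-- `H(α)` as a linear operator on `V_N`. -/
noncomputable def HalphaL (N : ℕ) [NeZero N] (α : ℝ) : Module.End ℂ (StateSpace N) :=
  HxyzL N (1 + α) (1 - α) ((α ^ 2 - 1) / 2)

/-- The kernel `(-1)^{m(μ,ν)}` of the rotation operator, as a product over sites. -/
lemma neg_one_pow_mCount {N : ℕ} [NeZero N] (μ ν : Config N) :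
    (-1 : ℂ) ^ mCount μ ν = ∏ j, if μ j = -1 ∧ ν j = 1 then (-1 : ℂ) else 1 := by
  rw [Finset.prod_ite, Finset.prod_const, Finset.prod_const_one, mul_one, mCount]

lemma neg_one_pow_mCount_flipAt_right {N : ℕ} [NeZero N] (μ ν : Config N) (j : ZMod N) :
    (-1 : ℂ) ^ mCount μ (flipAt ν j) = spin μ j * (-1 : ℂ) ^ mCount μ ν := by
  rw [neg_one_pow_mCount, neg_one_pow_mCount, ← Finset.mul_prod_erase _ _ (Finset.mem_univ j),
    ← Finset.mul_prod_erase _ _ (Finset.mem_univ j), ← mul_assoc]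
  congr 1
  · rcases Int.units_eq_one_or (μ j) with h | h <;>
      rcases Int.units_eq_one_or (ν j) with h' | h' <;> simp [flipAt, spin, h, h']
  · refine Finset.prod_congr rfl fun i hi => ?_
    simp [flipAt, Finset.ne_of_mem_erase hi]

lemma neg_one_pow_mCount_flipAt_left {N : ℕ} [NeZero N] (μ ν : Config N) (j : ZMod N) :
    (-1 : ℂ) ^ mCount (flipAt μ j) ν = -spin ν j * (-1 : ℂ) ^ mCount μ ν := by
  rw [neg_one_pow_mCount, neg_one_pow_mCount, ← Finset.mul_prod_erase _ _ (Finset.mem_univ j),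
    ← Finset.mul_prod_erase _ _ (Finset.mem_univ j), ← mul_assoc]
  congr 1
  · rcases Int.units_eq_one_or (μ j) with h | h <;>
      rcases Int.units_eq_one_or (ν j) with h' | h' <;> simp [flipAt, spin, h, h']
  · refine Finset.prod_congr rfl fun i hi => ?_
    simp [flipAt, Finset.ne_of_mem_erase hi]

lemma flipAt_flipAt {N : ℕ} (μ : Config N) (j : ZMod N) : flipAt (flipAt μ j) j = μ := by
  simp [flipAt]

lemma flipAt_comm {N : ℕ} (μ : Config N) (i j : ZMod N) :
    flipAt (flipAt μ i) j = flipAt (flipAt μ j) i := by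
  rcases eq_or_ne i j with rfl | h
  · rfl
  · simp [flipAt, h, h.symm, Function.update_comm h]

lemma flipPair_involutive {N : ℕ} (j : ZMod N) :
    Function.Involutive fun μ : Config N => flipPair μ j := fun μ => by
  simp only [flipPair]
  rw [flipAt_comm (flipAt μ j) (j + 1) j, flipAt_flipAt, flipAt_flipAt]

lemma spin_mul_spin_flipPair {N : ℕ} (μ : Config N) (j : ZMod N) :
    spin (flipPair μ j) j * spin (flipPair μ j) (j + 1) = spin μ j * spin μ (j + 1) := by
  rcases eq_or_ne (j + 1) j with h | h
  · have : flipPair μ j = μ := by rw [flipPair, h, flipAt_flipAt]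
    rw [this]
  · simp [flipPair, flipAt, spin, h, h.symm]

/-- The rotation about the `y`-axis exchanges the couplings `Jx` and `Jz`. -/
lemma Ry_Hxyz (N : ℕ) [NeZero N] (Jx Jy Jz : ℝ) (Ψ : StateSpace N) :
    Ry N (Hxyz N Jx Jy Jz Ψ) = Hxyz N Jz Jy Jx (Ry N Ψ) := by
  funext μ
  have key (j : ZMod N) :
      ∑ ν, (-1 : ℂ) ^ mCount μ ν *
        (((Jx : ℂ) - (Jy : ℂ) * spin ν j * spin ν (j + 1)) * Ψ (flipPair ν j)
          + (Jz : ℂ) * spin ν j * spin ν (j + 1) * Ψ ν) =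
      ((Jz : ℂ) - (Jy : ℂ) * spin μ j * spin μ (j + 1)) *
          ∑ ν, (-1 : ℂ) ^ mCount (flipPair μ j) ν * Ψ ν
        + (Jx : ℂ) * spin μ j * spin μ (j + 1) * ∑ ν, (-1 : ℂ) ^ mCount μ ν * Ψ ν := by
    have hflip : ∑ ν, (-1 : ℂ) ^ mCount μ ν *
        (((Jx : ℂ) - (Jy : ℂ) * spin ν j * spin ν (j + 1)) * Ψ (flipPair ν j)) =
        ∑ ν, (-1 : ℂ) ^ mCount μ (flipPair ν j) *
          (((Jx : ℂ) - (Jy : ℂ) * spin ν j * spin ν (j + 1)) * Ψ ν) := by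
      refine Fintype.sum_equiv (flipPair_involutive j).toPerm _ _ fun ν => ?_
      have hinv := flipPair_involutive j ν
      simp only at hinv
      simp only [Function.Involutive.coe_toPerm, hinv, mul_assoc, spin_mul_spin_flipPair]
    simp only [mul_add, Finset.sum_add_distrib]
    rw [hflip, ← Finset.sum_add_distrib, Finset.mul_sum, Finset.mul_sum,
      ← Finset.sum_add_distrib]
    refine Finset.sum_congr rfl fun ν _ => ?_
    simp only [flipPair, neg_one_pow_mCount_flipAt_left, neg_one_pow_mCount_flipAt_right]
    ring
  simp only [Ry, Hxyz]
  calc _ = ((Real.sqrt 2 : ℂ) ^ N)⁻¹ * (-(1 / 2 : ℂ) * ∑ j : ZMod N,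
        ∑ ν, (-1 : ℂ) ^ mCount μ ν *
        (((Jx : ℂ) - (Jy : ℂ) * spin ν j * spin ν (j + 1)) * Ψ (flipPair ν j)
          + (Jz : ℂ) * spin ν j * spin ν (j + 1) * Ψ ν)) := by
        rw [Finset.sum_comm, Finset.mul_sum (Finset.univ : Finset (Config N)) _ (-(1 / 2 : ℂ))]
        congr 1
        refine Finset.sum_congr rfl fun ν _ => ?_
        rw [← Finset.mul_sum]
        ring
    _ = _ := by
        simp only [key]
        rw [mul_left_comm,
          Finset.mul_sum (Finset.univ : Finset (ZMod N)) _ ((Real.sqrt 2 : ℂ) ^ N)⁻¹]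
        congr 1
        refine Finset.sum_congr rfl fun j _ => ?_
        ring

lemma Ry_smul (N : ℕ) [NeZero N] (c : ℂ) (Ψ : StateSpace N) : Ry N (c • Ψ) = c • Ry N Ψ := by
  funext μ
  simp only [Ry, Pi.smul_apply, smul_eq_mul, Finset.mul_sum]
  exact Finset.sum_congr rfl fun ν _ => by ring

lemma Hxyz_smul_couplings (N : ℕ) [NeZero N] (k Jx Jy Jz : ℝ) (Ψ : StateSpace N) :
    Hxyz N (k * Jx) (k * Jy) (k * Jz) Ψ = (k : ℂ) • Hxyz N Jx Jy Jz Ψ := by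
  funext μ
  simp only [Hxyz, Pi.smul_apply, smul_eq_mul, Finset.mul_sum]
  exact Finset.sum_congr rfl fun j _ => by push_cast; ring

/-- The Hamiltonian commutes with spin inversion. -/
lemma Hxyz_invOp (N : ℕ) [NeZero N] (Jx Jy Jz : ℝ) (Ψ : StateSpace N) :
    Hxyz N Jx Jy Jz (invOp N Ψ) = invOp N (Hxyz N Jx Jy Jz Ψ) := by
  have hneg (μ : Config N) (i : ZMod N) :
      (fun l => -(flipAt μ i l)) = flipAt (fun l => -(μ l)) i := by
    funext l
    rcases eq_or_ne l i with rfl | h <;> simp [flipAt, *]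
  funext μ
  simp [Hxyz, invOp, flipPair, hneg, spin]

/-- The rotation maps `E(α)`-eigenvectors of `H(α)` to `E(α')`-eigenvectors of `H(α')`, where
`α' = (α+3)/(α-1)`. -/
lemma Halpha_Ry (N : ℕ) [NeZero N] {α : ℝ} (hα : α ≠ 1) {v : StateSpace N}
    (hv : Halpha N α v = ((Eval N α : ℝ) : ℂ) • v) :
    Halpha N ((α + 3) / (α - 1)) (Ry N v) =
      ((Eval N ((α + 3) / (α - 1)) : ℝ) : ℂ) • Ry N v := by
  have h1 : α - 1 ≠ 0 := sub_ne_zero.2 hα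
  set β := (α + 3) / (α - 1) with hβ
  set k := (α - 1) ^ 2 / 4 with hk
  have hk0 : (k : ℂ) ≠ 0 := by
    have : k ≠ 0 := by positivity
    exact_mod_cast this
  have hz : (α ^ 2 - 1) / 2 = k * (1 + β) := by rw [hβ, hk]; field_simp; ring
  have hy : 1 - α = k * (1 - β) := by rw [hβ, hk]; field_simp; ring
  have hx : 1 + α = k * ((β ^ 2 - 1) / 2) := by rw [hβ, hk]; field_simp; ring
  have hE : Eval N α = k * Eval N β := by
    simp only [Eval]
    rw [hβ, hk]
    field_simp
    ring
  have h := congrArg (Ry N) hv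
  rw [Ry_smul, Halpha, Ry_Hxyz, hz, hy, hx, Hxyz_smul_couplings, hE, Complex.ofReal_mul,
    mul_smul] at h
  exact smul_right_injective _ hk0 h

lemma Ry_apply_one (N : ℕ) [NeZero N] (v : StateSpace N) :
    Ry N v (fun _ => 1) = ((Real.sqrt 2 : ℂ) ^ N)⁻¹ * ∑ μ, v μ := by
  simp [Ry, mCount, show ¬ (1 : ℤˣ) = -1 by decide]

lemma Ry_apply_neg_one (N : ℕ) [NeZero N] {v : StateSpace N}
    (hv : ∀ μ : Config N, Odd (nPlus μ) → v μ = 0) :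
    Ry N v (fun _ => -1) = ((Real.sqrt 2 : ℂ) ^ N)⁻¹ * ∑ μ, v μ := by
  simp only [Ry]
  congr 1
  refine Finset.sum_congr rfl fun ν _ => ?_
  rcases Nat.even_or_odd (nPlus ν) with h | h
  · have : mCount (fun _ => -1) ν = nPlus ν := by simp [mCount, nPlus]
    rw [this, h.neg_one_pow, one_mul]
  · rw [hv ν h, mul_zero]

/-- `Rʸ v = c · (w + I w)` with `c = (Σ_μ v(μ)) / (2^{N/2} w(−⋯−))`. -/
theorem Ry_of_eigenvector (N : ℕ) [NeZero N]
    (hN : Odd N) (α : ℝ) (hα : α ≠ 1)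
    (v w : StateSpace N) (hv0 : v ≠ 0) (hw0 : w ≠ 0)
    (hv : Halpha N α v = ((Eval N α : ℝ) : ℂ) • v)
    (hw : Halpha N ((α + 3) / (α - 1)) w = ((Eval N ((α + 3) / (α - 1)) : ℝ) : ℂ) • w)
    (hvpar : ∀ μ : Config N, Odd (nPlus μ) → v μ = 0)
    (hwpar : ∀ μ : Config N, Odd (nPlus μ) → w μ = 0)
    (hwm : w (fun _ => -1) ≠ 0)
    (hdim : Module.finrank ℂ
      (Module.End.eigenspace (HalphaL N ((α + 3) / (α - 1)))
        ((Eval N ((α + 3) / (α - 1)) : ℝ) : ℂ)) = 2) :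
    Ry N v = ((∑ μ : Config N, v μ) / ((Real.sqrt 2 : ℂ) ^ N * w (fun _ => -1)))
      • (w + invOp N w) := by
  set β := (α + 3) / (α - 1)
  have hone : w (fun _ => 1) = 0 := hwpar _ (by simpa [nPlus, ZMod.card] using hN)
  have hIw : Halpha N β (invOp N w) = ((Eval N β : ℝ) : ℂ) • invOp N w := by
    rw [Halpha, Hxyz_invOp, ← Halpha, hw]
    rfl
  have hli : LinearIndependent ℂ ![w, invOp N w] := by
    refine LinearIndependent.pair_iff.2 fun a b hab => ?_
    have hm := congrFun hab fun _ => -1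
    have hp := congrFun hab fun _ => 1
    simpa [invOp, hone, hwm] using And.intro hm hp
  have hle : Submodule.span ℂ (Set.range ![w, invOp N w]) ≤
      Module.End.eigenspace (HalphaL N β) ((Eval N β : ℝ) : ℂ) := by
    rw [Submodule.span_le]
    rintro _ ⟨i, rfl⟩
    fin_cases i
    · exact Module.End.mem_eigenspace_iff.2 hw
    · exact Module.End.mem_eigenspace_iff.2 hIw
  have hspan := Submodule.eq_of_le_of_finrank_eq hle
    (by rw [finrank_span_eq_card hli, hdim, Fintype.card_fin])
  have hmem : Ry N v ∈ Submodule.span ℂ (Set.range ![w, invOp N w]) := by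
    rw [hspan]
    exact Module.End.mem_eigenspace_iff.2 (Halpha_Ry N hα hv)
  rw [Matrix.range_cons_cons_empty, Submodule.mem_span_pair] at hmem
  obtain ⟨a, b, hab⟩ := hmem
  have hm := congrFun hab fun _ => -1
  have hp := congrFun hab fun _ => 1
  rw [Ry_apply_neg_one N hvpar] at hm
  rw [Ry_apply_one] at hp
  simp only [Pi.add_apply, Pi.smul_apply, smul_eq_mul, invOp, neg_neg, hone, mul_zero, add_zero,
    zero_add] at hm hp
  have hc {x : ℂ} (hx : x * w (fun _ => -1) = ((Real.sqrt 2 : ℂ) ^ N)⁻¹ * ∑ μ, v μ) :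
      x = (∑ μ : Config N, v μ) / ((Real.sqrt 2 : ℂ) ^ N * w (fun _ => -1)) := by
    rw [← div_div, eq_div_iff hwm, hx, div_eq_inv_mul]
  rw [← hab, smul_add, hc hm, hc hp]
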